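/- Let $X, Y \in C^2([0,1]^2;\mathbb{R})$. Suppose that for all integers $m,n \ge 0$, $\int_0^1\int_0^1 s_1^{2m+n} s_2^{2n+m}\, \partial_{12}X_{s_1,s_2}\, ds_1\, ds_2 = \int_0^1\int_0^1 s_1^{2m+n} s_2^{2n+m}\, \partial_{12}Y_{s_1,s_2}\, ds_1\, ds_2$. Then $\partial_{12}X = \partial_{12}Y$ on $[0,1]^2$. -/

import Mathlib

/-!
Put `D = ∂₁₂X - ∂₁₂Y`, a continuous function, and `Φ(s₁, s₂) = (s₁² s₂, s₁ s₂²)`, a continuous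
self-map of the unit square. Since `s₁^(2m+k) s₂^(2k+m) = (s₁² s₂)^m (s₁ s₂²)^k`, the hypothesis says
that `D` is orthogonal to `P ∘ Φ` for every polynomial `P` in two variables. By Stone–Weierstrass,
`D` is orthogonal to `F ∘ Φ` for every continuous `F` on the square (`integral_comp_eq_zero`).

A point `p` of the open square is the only point of the closed square that `Φ` sends to `Φ p`, so if
`D p > 0`, then `Φ p` has positive distance to the compact set `C = Φ (closed square \ U)`, where
`U` is the part of the open square on which `D > 0`. Testing with `F = dist(·, C)` makes
`(F ∘ Φ) * D` nonnegative with zero integral, hence zero on the open square, although it is positive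
at `p` (`nonpos_of_moments`). Applied to `±D` this gives `D = 0` on the open square, and by
continuity on the closed one.
-/

/-- The mixed partial derivative `∂²f/∂r₁∂r₂`. -/
noncomputable def d12 (f : ℝ × ℝ → ℝ) (p : ℝ × ℝ) : ℝ :=
  deriv (fun a => deriv (fun b => f (a, b)) p.2) p.1

open MeasureTheory Set

/-- The map `(s₁, s₂) ↦ (s₁² s₂, s₁ s₂²)`, with both coordinates clamped to `[0,1]` so that it is a
globally defined map into the unit square; on `[0,1]²` the clamping does nothing. -/
noncomputable def monoMap (z : ℝ × ℝ) : unitInterval × unitInterval :=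
  (projIcc 0 1 zero_le_one (z.1 ^ 2 * z.2), projIcc 0 1 zero_le_one (z.1 * z.2 ^ 2))

lemma continuous_monoMap : Continuous monoMap := by
  unfold monoMap
  exact (continuous_projIcc.comp (by fun_prop)).prodMk (continuous_projIcc.comp (by fun_prop))

lemma monoMap_coe {z : ℝ × ℝ} (hz : z ∈ Icc (0:ℝ) 1 ×ˢ Icc (0:ℝ) 1) :
    ((monoMap z).1 : ℝ) = z.1 ^ 2 * z.2 ∧ ((monoMap z).2 : ℝ) = z.1 * z.2 ^ 2 := by
  obtain ⟨⟨h1, h2⟩, h3, h4⟩ := hz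
  have a1 : z.1 ^ 2 * z.2 ∈ Icc (0:ℝ) 1 :=
    ⟨by positivity, mul_le_one₀ (pow_le_one₀ h1 h2) h3 h4⟩
  have a2 : z.1 * z.2 ^ 2 ∈ Icc (0:ℝ) 1 :=
    ⟨by positivity, mul_le_one₀ h2 (by positivity) (pow_le_one₀ h3 h4)⟩
  constructor
  · simp only [monoMap, projIcc_of_mem _ a1]
  · simp only [monoMap, projIcc_of_mem _ a2]

/-- Points with positive coordinates have singleton fibres: `s₁³` and `s₂³` are recovered as
`u² / v` and `v² / u` from `(u, v) = (s₁² s₂, s₁ s₂²)`. -/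
lemma monoMap_inj {z p : ℝ × ℝ} (hz : z ∈ Icc (0:ℝ) 1 ×ˢ Icc (0:ℝ) 1)
    (hp : p ∈ Ioo (0:ℝ) 1 ×ˢ Ioo (0:ℝ) 1) (h : monoMap z = monoMap p) : z = p := by
  have hp' : p ∈ Icc (0:ℝ) 1 ×ˢ Icc (0:ℝ) 1 :=
    prod_mono Ioo_subset_Icc_self Ioo_subset_Icc_self hp
  obtain ⟨z1, z2⟩ := monoMap_coe hz
  obtain ⟨p1, p2⟩ := monoMap_coe hp'
  rw [h] at z1 z2
  have e1 := z1.symm.trans p1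
  have e2 := z2.symm.trans p2
  obtain ⟨⟨a1, -⟩, a2, -⟩ := hp
  obtain ⟨⟨b1, -⟩, b2, -⟩ := hz
  have hv : 0 < p.1 * p.2 ^ 2 := by positivity
  have hu : 0 < p.1 ^ 2 * p.2 := by positivity
  have c1 : z.1 ^ 3 = p.1 ^ 3 := by
    refine mul_right_cancel₀ hv.ne' ?_
    calc z.1 ^ 3 * (p.1 * p.2 ^ 2) = (z.1 ^ 2 * z.2) ^ 2 := by rw [← e2]; ring
      _ = _ := by rw [e1]; ring
  have c2 : z.2 ^ 3 = p.2 ^ 3 := by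
    refine mul_right_cancel₀ hu.ne' ?_
    calc z.2 ^ 3 * (p.1 ^ 2 * p.2) = (z.1 * z.2 ^ 2) ^ 2 := by rw [← e1]; ring
      _ = _ := by rw [e2]; ring
  exact Prod.ext ((pow_left_inj₀ b1 a1.le (by norm_num)).1 c1)
    ((pow_left_inj₀ b2 a2.le (by norm_num)).1 c2)

lemma integrableOn_square {g : ℝ × ℝ → ℝ} (hg : Continuous g) :
    IntegrableOn g (Ioc (0:ℝ) 1 ×ˢ Ioc (0:ℝ) 1) :=
  (hg.continuousOn.integrableOn_compact (isCompact_Icc.prod isCompact_Icc)).mono_set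
    (prod_mono Ioc_subset_Icc_self Ioc_subset_Icc_self)

lemma iterated_eq {g : ℝ × ℝ → ℝ} (hg : Continuous g) :
    (∫ s1 in (0:ℝ)..1, ∫ s2 in (0:ℝ)..1, g (s1, s2)) =
      ∫ z in Ioc (0:ℝ) 1 ×ˢ Ioc (0:ℝ) 1, g z := by
  simp only [intervalIntegral.integral_of_le zero_le_one]
  rw [Measure.volume_eq_prod, setIntegral_prod]
  exact integrableOn_square hg

/-- The functional `F ↦ ∫ (F ∘ Φ) D` over the unit square, on continuous functions with the
supremum norm. -/
noncomputable def pairing (D : ℝ × ℝ → ℝ) (hD : Continuous D) :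
    C(unitInterval × unitInterval, ℝ) →L[ℝ] ℝ :=
  have hi (F : C(unitInterval × unitInterval, ℝ)) :=
    integrableOn_square ((F.continuous.comp continuous_monoMap).mul hD)
  LinearMap.mkContinuous
    { toFun := fun F => ∫ z in Ioc (0:ℝ) 1 ×ˢ Ioc (0:ℝ) 1, F (monoMap z) * D z
      map_add' := fun F G => by
        simp only [ContinuousMap.add_apply, add_mul]
        exact integral_add (hi F) (hi G)
      map_smul' := fun c F => by
        simp only [ContinuousMap.smul_apply, smul_eq_mul, mul_assoc, RingHom.id_apply]
        exact integral_const_mul c _ }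
    (∫ z in Ioc (0:ℝ) 1 ×ˢ Ioc (0:ℝ) 1, ‖D z‖)
    (fun F => by
      rw [mul_comm, ← integral_const_mul]
      refine norm_integral_le_of_norm_le ((integrableOn_square hD.norm).const_mul _) ?_
      refine Filter.Eventually.of_forall fun z => ?_
      rw [norm_mul]
      exact mul_le_mul_of_nonneg_right (F.norm_coe_le_norm _) (norm_nonneg _))

lemma pairing_apply (D : ℝ × ℝ → ℝ) (hD : Continuous D) (F : C(unitInterval × unitInterval, ℝ)) :
    pairing D hD F = ∫ z in Ioc (0:ℝ) 1 ×ˢ Ioc (0:ℝ) 1, F (monoMap z) * D z := rfl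

/-- Stone–Weierstrass step: vanishing moments force orthogonality to every `F ∘ Φ`. -/
lemma integral_comp_eq_zero (D : ℝ × ℝ → ℝ) (hD : Continuous D)
    (h : ∀ m k : ℕ, (∫ s1 in (0:ℝ)..1, ∫ s2 in (0:ℝ)..1,
        s1 ^ (2 * m + k) * s2 ^ (2 * k + m) * D (s1, s2)) = 0)
    (F : C(unitInterval × unitInterval, ℝ)) :
    ∫ z in Ioc (0:ℝ) 1 ×ˢ Ioc (0:ℝ) 1, F (monoMap z) * D z = 0 := by
  let x : C(unitInterval × unitInterval, ℝ) := ⟨fun w => (w.1 : ℝ), by fun_prop⟩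
  let y : C(unitInterval × unitInterval, ℝ) := ⟨fun w => (w.2 : ℝ), by fun_prop⟩
  let A : Subalgebra ℝ C(unitInterval × unitInterval, ℝ) := Algebra.adjoin ℝ {x, y}
  have hx : x ∈ A := Algebra.subset_adjoin (by simp)
  have hy : y ∈ A := Algebra.subset_adjoin (by simp)
  have hsep : A.SeparatesPoints := by
    intro a b hab
    by_cases h1 : a.1 = b.1
    · refine ⟨y, ⟨y, hy, rfl⟩, fun h2 => hab (Prod.ext h1 (Subtype.ext h2))⟩
    · exact ⟨x, ⟨x, hx, rfl⟩, fun h2 => h1 (Subtype.ext h2)⟩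
  have htop := ContinuousMap.subalgebra_topologicalClosure_eq_top_of_separatesPoints A hsep
  have hmono (m k : ℕ) : pairing D hD (x ^ m * y ^ k) = 0 := by
    refine Eq.trans ?_ (h m k)
    rw [pairing_apply,
      iterated_eq (g := fun z => z.1 ^ (2 * m + k) * z.2 ^ (2 * k + m) * D z) (by fun_prop)]
    refine setIntegral_congr_fun (measurableSet_Ioc.prod measurableSet_Ioc) fun z hz => ?_
    obtain ⟨e1, e2⟩ := monoMap_coe (prod_mono Ioc_subset_Icc_self Ioc_subset_Icc_self hz)
    simp only [ContinuousMap.mul_apply, ContinuousMap.pow_apply, x, y, ContinuousMap.coe_mk, e1, e2]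
    ring
  have hA : ∀ G ∈ A, pairing D hD G = 0 := by
    intro G hG
    change G ∈ Subalgebra.toSubmodule A at hG
    rw [Algebra.adjoin_eq_span] at hG
    refine (Submodule.span_le (p := LinearMap.ker (pairing D hD).toLinearMap)).2 ?_ hG
    intro q hq
    obtain ⟨m, k, rfl⟩ := (Submonoid.mem_closure_pair _ _ _).1 hq
    exact hmono m k
  have hF : F ∈ closure (A : Set C(unitInterval × unitInterval, ℝ)) := by
    rw [← Subalgebra.topologicalClosure_coe, htop]
    trivial
  exact closure_minimal (t := {G | pairing D hD G = 0}) hA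
    (isClosed_eq (pairing D hD).continuous continuous_const) hF

lemma nonpos_of_moments (D : ℝ × ℝ → ℝ) (hD : Continuous D)
    (h : ∀ m k : ℕ, (∫ s1 in (0:ℝ)..1, ∫ s2 in (0:ℝ)..1,
        s1 ^ (2 * m + k) * s2 ^ (2 * k + m) * D (s1, s2)) = 0)
    {p : ℝ × ℝ} (hp : p ∈ Ioo (0:ℝ) 1 ×ˢ Ioo (0:ℝ) 1) : D p ≤ 0 := by
  by_contra! hpos
  set O : Set (ℝ × ℝ) := Ioo (0:ℝ) 1 ×ˢ Ioo (0:ℝ) 1 with hO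
  have hOo : IsOpen O := isOpen_Ioo.prod isOpen_Ioo
  set S : Set (ℝ × ℝ) := Icc (0:ℝ) 1 ×ˢ Icc (0:ℝ) 1 with hS
  have hOS : O ⊆ S := prod_mono Ioo_subset_Icc_self Ioo_subset_Icc_self
  set U : Set (ℝ × ℝ) := O ∩ {z | 0 < D z} with hU
  have hUo : IsOpen U := hOo.inter (isOpen_lt continuous_const hD)
  set C := monoMap '' (S \ U) with hC
  have hCc : IsCompact C :=
    ((isCompact_Icc.prod isCompact_Icc).diff hUo).image continuous_monoMap
  -- `C` must be nonempty, as `infDist` to the empty set is `0`; the corner `0` provides a point.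
  have hCn : C.Nonempty := ⟨monoMap (0, 0), (0, 0), by simp [hS, hU, hO], rfl⟩
  let F : C(unitInterval × unitInterval, ℝ) :=
    ⟨fun w => Metric.infDist w C, Metric.continuous_infDist_pt C⟩
  let G : ℝ × ℝ → ℝ := fun z => F (monoMap z) * D z
  have hG : Continuous G := (F.continuous.comp continuous_monoMap).mul hD
  have hG0 : ∀ z ∈ S, 0 ≤ G z := by
    intro z hz
    by_cases hzU : z ∈ U
    · exact mul_nonneg Metric.infDist_nonneg hzU.2.le
    · have : F (monoMap z) = 0 := Metric.infDist_zero_of_mem ⟨z, ⟨hz, hzU⟩, rfl⟩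
      simp [G, this]
  have hint : ∫ z in Ioc (0:ℝ) 1 ×ˢ Ioc (0:ℝ) 1, G z = 0 := integral_comp_eq_zero D hD h F
  have hae : G =ᵐ[volume.restrict (Ioc (0:ℝ) 1 ×ˢ Ioc (0:ℝ) 1)] 0 := by
    refine (setIntegral_eq_zero_iff_of_nonneg_ae ?_ (integrableOn_square hG)).1 hint
    filter_upwards [ae_restrict_mem (measurableSet_Ioc.prod measurableSet_Ioc)] with z hz
    exact hG0 z (prod_mono Ioc_subset_Icc_self Ioc_subset_Icc_self hz)
  have haeO : G =ᵐ[volume.restrict O] 0 :=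
    ae_restrict_of_ae_restrict_of_subset (prod_mono Ioo_subset_Ioc_self Ioo_subset_Ioc_self) hae
  have hGp : G p = 0 :=
    Measure.eqOn_open_of_ae_eq haeO hOo hG.continuousOn continuousOn_const hp
  have hpC : monoMap p ∉ C := by
    rintro ⟨z, hz, hzp⟩
    rw [monoMap_inj hz.1 hp hzp] at hz
    exact hz.2 ⟨hp, hpos⟩
  have hFp : 0 < F (monoMap p) := (hCc.isClosed.notMem_iff_infDist_pos hCn).1 hpC
  exact (mul_pos hFp hpos).ne' hGp

lemma continuous_d12 {f : ℝ × ℝ → ℝ} (hf : ContDiff ℝ 2 f) : Continuous (d12 f) := by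
  have h1 : ∀ a b : ℝ, deriv (fun b => f (a, b)) b = fderiv ℝ f (a, b) (0, 1) := fun a b =>
    ((hf.differentiable (by norm_num) (a, b)).hasFDerivAt.comp_hasDerivAt b
      ((hasDerivAt_const b a).prodMk (hasDerivAt_id b))).deriv
  let g : ℝ × ℝ → ℝ := fun z => fderiv ℝ f z (0, 1)
  have hg : ContDiff ℝ 1 g := (hf.fderiv_right (m := 1) (by norm_num)).clm_apply contDiff_const
  have h2 : d12 f = fun p => fderiv ℝ g p (1, 0) := by
    funext p
    simp only [d12, h1]
    exact ((hg.differentiable (by norm_num) (p.1, p.2)).hasFDerivAt.comp_hasDerivAt p.1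
      ((hasDerivAt_id p.1).prodMk (hasDerivAt_const p.1 p.2))).deriv
  rw [h2]
  exact (hg.continuous_fderiv (by norm_num)).clm_apply continuous_const

/-- if two `C²` fields `X, Y` on `[0,1]²` have the same integrals against
all monomials `s₁^{2m+k} s₂^{2k+m}`, then `∂₁₂X = ∂₁₂Y` on `[0,1]²`. -/
theorem stmt19 (X Y : ℝ × ℝ → ℝ) (hX : ContDiff ℝ 2 X) (hY : ContDiff ℝ 2 Y)
    (h : ∀ m k : ℕ,
      (∫ s1 in (0:ℝ)..1, ∫ s2 in (0:ℝ)..1,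
        s1 ^ (2 * m + k) * s2 ^ (2 * k + m) * d12 X (s1, s2)) =
      ∫ s1 in (0:ℝ)..1, ∫ s2 in (0:ℝ)..1,
        s1 ^ (2 * m + k) * s2 ^ (2 * k + m) * d12 Y (s1, s2)) :
    ∀ p ∈ Set.Icc (0:ℝ) 1 ×ˢ Set.Icc (0:ℝ) 1, d12 X p = d12 Y p := by
  have key : ∀ {P Q : ℝ × ℝ → ℝ}, Continuous P → Continuous Q →
      (∀ m k : ℕ, (∫ s1 in (0:ℝ)..1, ∫ s2 in (0:ℝ)..1,
          s1 ^ (2 * m + k) * s2 ^ (2 * k + m) * P (s1, s2)) =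
        ∫ s1 in (0:ℝ)..1, ∫ s2 in (0:ℝ)..1,
          s1 ^ (2 * m + k) * s2 ^ (2 * k + m) * Q (s1, s2)) →
      ∀ p ∈ Ioo (0:ℝ) 1 ×ˢ Ioo (0:ℝ) 1, P p ≤ Q p := by
    intro P Q hP hQ hPQ p hp
    refine sub_nonpos.1 (nonpos_of_moments (fun z => P z - Q z) (hP.sub hQ) (fun m k => ?_) hp)
    have e := hPQ m k
    rw [iterated_eq (g := fun z => z.1 ^ (2 * m + k) * z.2 ^ (2 * k + m) * P z) (by fun_prop),
      iterated_eq (g := fun z => z.1 ^ (2 * m + k) * z.2 ^ (2 * k + m) * Q z) (by fun_prop)] at e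
    rw [iterated_eq (g := fun z => z.1 ^ (2 * m + k) * z.2 ^ (2 * k + m) * (P z - Q z))
      (by fun_prop)]
    simp only [mul_sub]
    rw [integral_sub (integrableOn_square (by fun_prop)) (integrableOn_square (by fun_prop)), e,
      sub_self]
  have cX := continuous_d12 hX
  have cY := continuous_d12 hY
  have hO : EqOn (d12 X) (d12 Y) (Ioo (0:ℝ) 1 ×ˢ Ioo (0:ℝ) 1) := fun p hp =>
    le_antisymm (key cX cY h p hp) (key cY cX (fun m k => (h m k).symm) p hp)
  intro p hp
  refine hO.closure cX cY ?_
  rwa [closure_prod_eq, closure_Ioo zero_ne_one]
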